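/- Let S be a skew lattice, let x, y ∈ S with x D y, and let b ∈ S satisfy b∧x∧b = b and b∧y∧b = b. Then (x∧b∧x)∧(y∧b∧y) = (x∧y)∧b∧(x∧y); that is, the coset map z ↦ z∧b∧z is a ∧-homomorphism on the D-class of x. -/

import Mathlib

/-!
The `∧`-reduct of a skew lattice is a regular band: it satisfies `a∧u∧a∧v∧a = a∧u∧v∧a`. To see
this, put `c = (a∧u)∨a` and `d = a∨(v∧a)`. Absorption makes `c` and `d` Green-equivalent to `a`,
`c` for the relation R and `d` for the relation L, so `c∧d = a`; it also gives `(a∧u)∧c = a∧u` and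
`d∧(v∧a) = v∧a`. Hence `a∧u∧v∧a = (a∧u)∧c∧d∧(v∧a) = (a∧u)∧a∧(v∧a)`.

In a regular band, if `x D y` and `b` lies below their class, then `x∧y∧b = x∧b` and
`b∧x∧y = b∧y`; both sides of the theorem therefore reduce to `x∧b∧y`.
-/

/-- The identity that singles out the regular bands among all bands. Idempotency is kept separate,
so that the identity can be imposed on any semigroup. -/
def RegularIdentity (S : Type*) [Mul S] : Prop :=
  ∀ a u v : S, a * u * a * v * a = a * u * v * a

/-- Skew lattices, with the meet `∧` written as multiplication so that semigroup theory applies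
to it directly, and the join `∨` written as `⊔`. -/
class SkewLattice (S : Type*) extends Semigroup S, Max S where
  mul_self (x : S) : x * x = x
  sup_self (x : S) : x ⊔ x = x
  sup_assoc (x y z : S) : x ⊔ y ⊔ z = x ⊔ (y ⊔ z)
  mul_sup_self (x y : S) : x * (x ⊔ y) = x
  sup_mul_self (x y : S) : (y ⊔ x) * x = x
  sup_mul_right_self (x y : S) : x ⊔ x * y = x
  mul_left_sup_self (x y : S) : y * x ⊔ x = x

section Semigroup

variable {S : Type*} [Semigroup S] {a b c d x y : S}

theorem mul_eq_of_greenR_of_greenL (hdc : IsIdempotentElem (d * c))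
    (hca : c * a = a) (hac : a * c = c) (had : a * d = a) (hda : d * a = d) : c * d = a := by
  have haa : a * a = a := by
    calc
      a * a = a * (c * a) := by rw [hca]
      _ = a := by rw [← mul_assoc, hac, hca]
  calc
    c * d = a * c * (d * a) := by rw [hac, hda]
    _ = (a * d) * c * (d * (c * a)) := by rw [had, hca]
    _ = a * (d * c * (d * c)) * a := by simp only [mul_assoc]
    _ = (a * d) * (c * a) := by rw [hdc.eq]; simp only [mul_assoc]
    _ = a := by rw [had, hca, haa]

namespace RegularIdentity

theorem mul_mul_eq_mul_right (h : RegularIdentity S) (hxy : x * y * x = x) (hbx : b * x * b = b) :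
    x * y * b = x * b :=
  calc
    x * y * b = x * y * b * x * b := by rw [mul_assoc _ b x, mul_assoc _ (b * x), hbx]
    _ = x * y * x * b * x * b := by rw [h]
    _ = x * (b * x * b) := by rw [hxy]; simp only [mul_assoc]
    _ = x * b := by rw [hbx]

theorem mul_mul_eq_mul_left (h : RegularIdentity S) (hxy : x * y * x = x) (hbx : b * x * b = b) :
    b * y * x = b * x :=
  calc
    b * y * x = b * (x * b * y * x) := by simp only [← mul_assoc, hbx]
    _ = b * (x * b * x * y * x) := by rw [h]
    _ = b * x * b * (x * y * x) := by simp only [mul_assoc]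
    _ = b * x := by rw [hbx, hxy]

theorem mul_mul_self_trans (h : RegularIdentity S) (hbx : b * x * b = b) (hxy : x * y * x = x) :
    b * y * b = b :=
  calc
    b * y * b = b * x * b * y * b := by rw [hbx]
    _ = b * (x * y * b) := by rw [h]; simp only [mul_assoc]
    _ = b := by rw [h.mul_mul_eq_mul_right hxy hbx, ← mul_assoc, hbx]

end RegularIdentity

theorem coset_map_wedge_hom_general (h : RegularIdentity S)
    (hxy : x * y * x = x) (hyx : y * x * y = y) (hbx : b * x * b = b) :
    (x * b * x) * (y * b * y) = (x * y) * b * (x * y) := by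
  have hby : b * y * b = b := h.mul_mul_self_trans hbx hxy
  have hxyb : x * y * b = x * b := h.mul_mul_eq_mul_right hxy hbx
  have hbxy : b * x * y = b * y := h.mul_mul_eq_mul_left hyx hby
  calc
    (x * b * x) * (y * b * y) = x * (b * x * y) * b * y := by simp only [mul_assoc]
    _ = x * (b * y * b) * y := by rw [hbxy]; simp only [mul_assoc]
    _ = x * (b * x * y) := by rw [hby, hbxy, mul_assoc]
    _ = (x * b) * (x * y) := by simp only [mul_assoc]
    _ = (x * y) * b * (x * y) := by rw [hxyb]

end Semigroup

namespace SkewLattice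

variable {S : Type*} [SkewLattice S]

theorem mul_eq_left_of_sup_eq_right {x y : S} (h : x ⊔ y = y) : x * y = x := by
  rw [← h, mul_sup_self]

theorem mul_eq_right_of_sup_eq_left {x y : S} (h : x ⊔ y = x) : x * y = y := by
  rw [← h, sup_mul_self]

theorem mul_sup_mul_sup_mul (a u v : S) : (a * u ⊔ a) * (a ⊔ v * a) = a := by
  have sup_left : a ⊔ (a * u ⊔ a) = a := by rw [← sup_assoc, sup_mul_right_self, sup_self]
  have sup_right : a ⊔ v * a ⊔ a = a := by rw [sup_assoc, mul_left_sup_self, sup_self]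
  exact mul_eq_of_greenR_of_greenL (mul_self _)
    (sup_mul_self a _) (mul_eq_right_of_sup_eq_left sup_left)
    (mul_sup_self a _) (mul_eq_left_of_sup_eq_right sup_right)

theorem regularIdentity : RegularIdentity S := fun a u v =>
  calc
    a * u * a * v * a
      = a * u * ((a * u ⊔ a) * (a ⊔ v * a)) * (v * a) := by
        rw [mul_sup_mul_sup_mul, mul_assoc _ v a]
    _ = (a * u * (a * u ⊔ a)) * ((a ⊔ v * a) * (v * a)) := by simp only [mul_assoc]
    _ = a * u * v * a := by rw [mul_sup_self, sup_mul_self, ← mul_assoc]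

end SkewLattice

/-- The coset map z ↦ z∧b∧z is a ∧-homomorphism on a D-class. -/
theorem coset_map_wedge_hom {S : Type*} (wedge vee : S → S → S)
    (wedge_idem : ∀ x : S, wedge x x = x)
    (vee_idem : ∀ x : S, vee x x = x)
    (wedge_assoc : ∀ x y z : S, wedge (wedge x y) z = wedge x (wedge y z))
    (vee_assoc : ∀ x y z : S, vee (vee x y) z = vee x (vee y z))
    (abs₁ : ∀ x y : S, wedge x (vee x y) = x)
    (abs₂ : ∀ x y : S, wedge (vee y x) x = x)
    (abs₃ : ∀ x y : S, vee x (wedge x y) = x)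
    (abs₄ : ∀ x y : S, vee (wedge y x) x = x)
    (x y b : S)
    (hD : wedge (wedge x y) x = x ∧ wedge (wedge y x) y = y)
    (hbx : wedge (wedge b x) b = b)
    (hby : wedge (wedge b y) b = b) :
    wedge (wedge (wedge x b) x) (wedge (wedge y b) y) =
      wedge (wedge (wedge x y) b) (wedge x y) := by
  let _ : SkewLattice S :=
    { mul := wedge
      mul_assoc := wedge_assoc
      max := vee
      mul_self := wedge_idem
      sup_self := vee_idem
      sup_assoc := vee_assoc
      mul_sup_self := abs₁
      sup_mul_self := abs₂
      sup_mul_right_self := abs₃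
      mul_left_sup_self := abs₄ }
  exact coset_map_wedge_hom_general SkewLattice.regularIdentity hD.1 hD.2 hbx
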